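/- (Pointwise engine of the formula relating ∇ω to the intrinsic endomorphism.) Let φ ∈ Δ be a unit spinor. Then for all v, y, z ∈ ℝ^6: ⟨y·(v·φ), z·(j(φ))⟩ − ⟨y·φ, z·(v·(j(φ)))⟩ = −2·ψ_φ⁻(v, y, z). -/

import Mathlib

open RealInnerProductSpace

noncomputable section

/-- The spin representation space Δ = ℝ^8. -/
abbrev Δ : Type := EuclideanSpace ℝ (Fin 8)

/-- The standard skew endomorphism E_{ij} of ℝ^8: u_i ↦ u_j, u_j ↦ -u_i, others ↦ 0. -/
def E (i j : Fin 8) : Δ →ₗ[ℝ] Δ where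
  toFun v := v i • EuclideanSpace.single j (1 : ℝ) - v j • EuclideanSpace.single i (1 : ℝ)
  map_add' x y := by
    simp only [PiLp.add_apply, add_smul]
    module
  map_smul' c x := by
    simp only [PiLp.smul_apply, smul_eq_mul, RingHom.id_apply, mul_smul]
    module

/-- The seven Clifford endomorphisms e_1, …, e_7 (indexed 0,…,6). -/
def cliff : Fin 7 → (Δ →ₗ[ℝ] Δ) :=
  ![  E 0 7 + E 1 6 - E 2 5 - E 3 4,
    - E 0 6 + E 1 7 + E 2 4 - E 3 5,
    - E 0 5 + E 1 4 - E 2 7 + E 3 6,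
    - E 0 4 - E 1 5 - E 2 6 - E 3 7,
    - E 0 2 - E 1 3 + E 4 6 + E 5 7,
      E 0 3 - E 1 2 - E 4 7 + E 5 6,
      E 0 1 - E 2 3 - E 4 5 + E 6 7]

/-- j = e_1 ∘ e_2 ∘ e_3 ∘ e_4 ∘ e_5 ∘ e_6. -/
def jmap : Δ →ₗ[ℝ] Δ :=
  cliff 0 ∘ₗ cliff 1 ∘ₗ cliff 2 ∘ₗ cliff 3 ∘ₗ cliff 4 ∘ₗ cliff 5

/-- Clifford multiplication of a vector x ∈ ℝ^6 on a spinor. -/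
def cm6 (x : EuclideanSpace ℝ (Fin 6)) (φ : Δ) : Δ :=
  ∑ i : Fin 6, x i • cliff i.castSucc φ

/-- Clifford multiplication of a vector x ∈ ℝ^7 on a spinor. -/
def cm7 (x : EuclideanSpace ℝ (Fin 7)) (φ : Δ) : Δ :=
  ∑ i : Fin 7, x i • cliff i φ


/-- Standard basis vector of ℝ^6. -/
def v6 (i : Fin 6) : EuclideanSpace ℝ (Fin 6) := EuclideanSpace.single i (1 : ℝ)

/-- The 3-form ψ_φ(x,y,z) = -⟨x·y·z·φ, φ⟩ on ℝ^6. -/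
def psiP (φ : Δ) (x y z : EuclideanSpace ℝ (Fin 6)) : ℝ :=
  -⟪cm6 x (cm6 y (cm6 z φ)), φ⟫

/-- The 3-form ψ_φ⁻(x,y,z) = -⟨x·y·z·φ, j(φ)⟩ on ℝ^6. -/
def psiM (φ : Δ) (x y z : EuclideanSpace ℝ (Fin 6)) : ℝ :=
  -⟪cm6 x (cm6 y (cm6 z φ)), jmap φ⟫

/-- Action of a trilinear form on ℝ^6 on a spinor:
τ·χ := Σ_{i<j<k} τ(v_i,v_j,v_k) e_i(e_j(e_k(χ))). -/
def tact6 (τ : EuclideanSpace ℝ (Fin 6) → EuclideanSpace ℝ (Fin 6) →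
    EuclideanSpace ℝ (Fin 6) → ℝ) (χ : Δ) : Δ :=
  ∑ i : Fin 6, ∑ j : Fin 6, ∑ k : Fin 6,
    if i < j ∧ j < k then
      τ (v6 i) (v6 j) (v6 k) • cliff i.castSucc (cliff j.castSucc (cliff k.castSucc χ))
    else 0

/-- Action of a bilinear form on ℝ^6 on a spinor:
σ·χ := Σ_{i<j} σ(v_i,v_j) e_i(e_j(χ)). -/
def bact6 (σ : EuclideanSpace ℝ (Fin 6) → EuclideanSpace ℝ (Fin 6) → ℝ) (χ : Δ) : Δ :=
  ∑ i : Fin 6, ∑ j : Fin 6,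
    if i < j then σ (v6 i) (v6 j) • cliff i.castSucc (cliff j.castSucc χ) else 0

/-!
Clifford multiplication by vectors is skew-adjoint, so moving every vector to the left-hand side
rewrites the two inner products as `-⟪z·y·v·φ, jφ⟫` and `⟪v·z·y·φ, jφ⟫`. Transposing two adjacent
vectors in such a product changes its sign up to a multiple of some `⟪w·φ, jφ⟫`, and these vanish:
the seven endomorphisms satisfy `e₁ ⋯ e₇ = 1`, so `j = -e₇`, and `e₇φ` is orthogonal to every `eᵢφ`
with `i ≤ 6`. Hence the two inner products are `⟪v·y·z·φ, jφ⟫` and its negative.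
-/

section CliffordFamily

variable {ι S : Type*} [NormedAddCommGroup S] [InnerProductSpace ℝ S]

/-- Orthogonal Clifford generators: skew-adjoint, pairwise anticommuting square roots of `-1`.
Such a family makes `S` a module over the Clifford algebra of the negative definite form. -/
structure IsCliffordFamily (e : ι → Module.End ℝ S) : Prop where
  skew : ∀ i a b, ⟪e i a, b⟫ = -⟪a, e i b⟫
  mul_self : ∀ i, e i * e i = -1
  anticomm : Pairwise fun i j ↦ e i * e j = -(e j * e i)

/-- Clifford multiplication by a vector, where the `i`-th standard basis vector acts as `e i`. -/
def cliffordMul [Fintype ι] (e : ι → Module.End ℝ S) (x : EuclideanSpace ℝ ι) : Module.End ℝ S :=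
  ∑ i, x i • e i

namespace IsCliffordFamily

variable {e : ι → Module.End ℝ S}

theorem comp_injective {κ : Type*} (he : IsCliffordFamily e) {f : κ → ι}
    (hf : Function.Injective f) : IsCliffordFamily (e ∘ f) where
  skew i := he.skew (f i)
  mul_self i := he.mul_self (f i)
  anticomm := he.anticomm.comp_of_injective hf

theorem inner_apply_apply_eq_zero (he : IsCliffordFamily e) {i j : ι} (hij : i ≠ j) (φ : S) :
    ⟪e i φ, e j φ⟫ = 0 := by
  have h : ⟪e i φ, e j φ⟫ = -⟪e i φ, e j φ⟫ := calc
    ⟪e i φ, e j φ⟫ = -⟪φ, (e i * e j) φ⟫ := he.skew i φ (e j φ)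
    _ = ⟪φ, e j (e i φ)⟫ := by
      rw [he.anticomm hij, LinearMap.neg_apply, inner_neg_right, neg_neg, Module.End.mul_apply]
    _ = -⟪e i φ, e j φ⟫ := by rw [real_inner_comm (e j φ), he.skew j, neg_neg]
  linarith

variable [Fintype ι]

theorem cliffordMul_skew (he : IsCliffordFamily e) (x : EuclideanSpace ℝ ι) (a b : S) :
    ⟪cliffordMul e x a, b⟫ = -⟪a, cliffordMul e x b⟫ := by
  simp only [cliffordMul, LinearMap.sum_apply, LinearMap.smul_apply, sum_inner, inner_sum,
    real_inner_smul_left, real_inner_smul_right, he.skew, mul_neg, Finset.sum_neg_distrib]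

theorem cliffordMul_mul_add_swap (he : IsCliffordFamily e) (x y : EuclideanSpace ℝ ι) :
    cliffordMul e x * cliffordMul e y + cliffordMul e y * cliffordMul e x =
      (-2 * ⟪x, y⟫) • 1 := by
  classical
  have generators (i j : ι) : e i * e j + e j * e i = if i = j then (-2 : ℝ) • 1 else 0 := by
    split_ifs with hij
    · rw [hij, he.mul_self]
      module
    · rw [he.anticomm hij, neg_add_cancel]
  calc
    _ = ∑ i, ∑ j, (x i * y j) • (e i * e j + e j * e i) := by
      simp only [cliffordMul, Finset.sum_mul_sum, smul_mul_smul_comm, smul_add,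
        Finset.sum_add_distrib]
      rw [Finset.sum_comm (f := fun i j ↦ (y i * x j) • (e i * e j))]
      simp only [mul_comm (y _)]
    _ = ∑ i, (x i * y i) • (-2 : ℝ) • 1 := by
      simp only [generators, smul_ite, smul_zero, Finset.sum_ite_eq, Finset.mem_univ, if_true]
    _ = (-2 * ⟪x, y⟫) • 1 := by
      rw [← Finset.sum_smul, smul_smul, PiLp.inner_apply, mul_comm]
      simp only [RCLike.inner_apply, conj_trivial, mul_comm (y _)]

theorem cliffordMul_swap (he : IsCliffordFamily e) (x y : EuclideanSpace ℝ ι) (a : S) :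
    cliffordMul e x (cliffordMul e y a) =
      -cliffordMul e y (cliffordMul e x a) + (-2 * ⟪x, y⟫) • a := by
  have h := LinearMap.congr_fun (he.cliffordMul_mul_add_swap x y) a
  simp only [LinearMap.add_apply, Module.End.mul_apply, LinearMap.smul_apply,
    Module.End.one_apply] at h
  rw [← h, add_comm, add_neg_cancel_right]

variable {φ χ : S}

theorem inner_cliffordMul_swap_left (he : IsCliffordFamily e)
    (hχ : ∀ x, ⟪cliffordMul e x φ, χ⟫ = 0) (x y z : EuclideanSpace ℝ ι) :
    ⟪cliffordMul e x (cliffordMul e y (cliffordMul e z φ)), χ⟫ =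
      -⟪cliffordMul e y (cliffordMul e x (cliffordMul e z φ)), χ⟫ := by
  rw [he.cliffordMul_swap x y, inner_add_left, inner_neg_left, real_inner_smul_left, hχ,
    mul_zero, add_zero]

theorem inner_cliffordMul_swap_right (he : IsCliffordFamily e)
    (hχ : ∀ x, ⟪cliffordMul e x φ, χ⟫ = 0) (x y z : EuclideanSpace ℝ ι) :
    ⟪cliffordMul e x (cliffordMul e y (cliffordMul e z φ)), χ⟫ =
      -⟪cliffordMul e x (cliffordMul e z (cliffordMul e y φ)), χ⟫ := by
  rw [he.cliffordMul_swap y z, map_add, map_neg, map_smul, inner_add_left, inner_neg_left,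
    real_inner_smul_left, hχ, mul_zero, add_zero]

end IsCliffordFamily

theorem nabla_omega_engine_general [Fintype ι] {e : ι → Module.End ℝ S} (he : IsCliffordFamily e)
    {φ χ : S} (hχ : ∀ x, ⟪cliffordMul e x φ, χ⟫ = 0) (v y z : EuclideanSpace ℝ ι) :
    ⟪cliffordMul e y (cliffordMul e v φ), cliffordMul e z χ⟫ -
        ⟪cliffordMul e y φ, cliffordMul e z (cliffordMul e v χ)⟫ =
      2 * ⟪cliffordMul e v (cliffordMul e y (cliffordMul e z φ)), χ⟫ := by
  have first_term : ⟪cliffordMul e y (cliffordMul e v φ), cliffordMul e z χ⟫ =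
      ⟪cliffordMul e v (cliffordMul e y (cliffordMul e z φ)), χ⟫ := by
    rw [← neg_eq_iff_eq_neg.mpr (he.cliffordMul_skew z _ χ), he.inner_cliffordMul_swap_left hχ z,
      he.inner_cliffordMul_swap_right hχ y, he.inner_cliffordMul_swap_left hχ y, neg_neg, neg_neg]
  have second_term : ⟪cliffordMul e y φ, cliffordMul e z (cliffordMul e v χ)⟫ =
      -⟪cliffordMul e v (cliffordMul e y (cliffordMul e z φ)), χ⟫ := by
    rw [← he.inner_cliffordMul_swap_right hχ, he.cliffordMul_skew v, he.cliffordMul_skew z, neg_neg]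
  rw [first_term, second_term]
  ring

end CliffordFamily

theorem E_skew (i j : Fin 8) (a b : Δ) : ⟪E i j a, b⟫ = -⟪a, E i j b⟫ := by
  simp only [E, LinearMap.coe_mk, AddHom.coe_mk, inner_sub_left, inner_sub_right,
    real_inner_smul_left, real_inner_smul_right, EuclideanSpace.inner_single_left,
    EuclideanSpace.inner_single_right, conj_trivial]
  ring

theorem cliff_skew (i : Fin 7) (a b : Δ) : ⟪cliff i a, b⟫ = -⟪a, cliff i b⟫ := by
  fin_cases i <;>
    simp [cliff, inner_add_left, inner_add_right, inner_sub_left, inner_sub_right, E_skew] <;> ring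

/-- Every `eᵢ` is a signed permutation of coordinates; `cliffPartner i k` is the coordinate of `φ`
that appears, up to sign, as the `k`-th coordinate of `eᵢφ`. The indices are those of `cliff`, so
`i = 0` stands for `e₁`; the permutation flips a fixed set of binary digits of `k`. -/
def cliffPartner (i : Fin 7) (k : Fin 8) : Fin 8 :=
  k ^^^ ![7, 6, 5, 4, 2, 3, 1] i

/-- The sign with which the signed permutation `cliff i` moves a coordinate into the `k`-th place,
kept in `ℤ` so that sign identities are decidable. -/
def cliffSign : Fin 7 → Fin 8 → ℤ :=
  ![![-1, -1, 1, 1, -1, -1, 1, 1],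
    ![1, -1, -1, 1, 1, -1, -1, 1],
    ![1, -1, 1, -1, 1, -1, 1, -1],
    ![1, 1, 1, 1, -1, -1, -1, -1],
    ![1, 1, -1, -1, -1, -1, 1, 1],
    ![-1, 1, -1, 1, 1, -1, 1, -1],
    ![-1, 1, 1, -1, 1, -1, -1, 1]]

theorem E_apply (i j : Fin 8) (φ : Δ) (k : Fin 8) :
    E i j φ k = (if k = j then φ i else 0) - if k = i then φ j else 0 := by
  simp [E]

theorem cliff_apply (i : Fin 7) (φ : Δ) (k : Fin 8) :
    cliff i φ k = cliffSign i k * φ (cliffPartner i k) := by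
  fin_cases i <;> fin_cases k <;> simp [cliff, E_apply, cliffSign, cliffPartner]

theorem cliffPartner_cliffPartner_self :
    ∀ i k, cliffPartner i (cliffPartner i k) = k := by
  decide

theorem cliffPartner_comm :
    ∀ i j k, cliffPartner i (cliffPartner j k) = cliffPartner j (cliffPartner i k) := by
  decide

theorem cliffSign_mul_cliffSign_self :
    ∀ i k, cliffSign i k * cliffSign i (cliffPartner i k) = -1 := by
  decide

theorem cliffSign_anticomm :
    ∀ i j, i ≠ j → ∀ k, cliffSign i k * cliffSign j (cliffPartner i k) =
      -(cliffSign j k * cliffSign i (cliffPartner j k)) := by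
  decide

theorem cliff_mul_apply (i j : Fin 7) (φ : Δ) (k : Fin 8) :
    (cliff i * cliff j : Module.End ℝ Δ) φ k =
      (cliffSign i k * cliffSign j (cliffPartner i k) : ℤ) *
        φ (cliffPartner j (cliffPartner i k)) := by
  rw [Module.End.mul_apply, cliff_apply, cliff_apply, Int.cast_mul, mul_assoc]

theorem isCliffordFamily_cliff : IsCliffordFamily cliff where
  skew := cliff_skew
  mul_self i := by
    ext φ k
    rw [cliff_mul_apply, cliffSign_mul_cliffSign_self, cliffPartner_cliffPartner_self]
    simp
  anticomm i j hij := by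
    ext φ k
    rw [LinearMap.neg_apply, PiLp.neg_apply, cliff_mul_apply, cliff_mul_apply,
      cliffSign_anticomm i j hij, cliffPartner_comm, Int.cast_neg, neg_mul]

theorem jmap_eq_neg_cliff : jmap = -cliff 6 := by
  ext φ k
  fin_cases k <;> simp [jmap, cliff_apply, cliffSign, cliffPartner]

theorem cm6_eq_cliffordMul (x : EuclideanSpace ℝ (Fin 6)) (φ : Δ) :
    cm6 x φ = cliffordMul (cliff ∘ Fin.castSucc) x φ := by
  simp only [cm6, cliffordMul, LinearMap.sum_apply, LinearMap.smul_apply, Function.comp_apply]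

theorem inner_cm6_jmap_eq_zero (x : EuclideanSpace ℝ (Fin 6)) (φ : Δ) :
    ⟪cm6 x φ, jmap φ⟫ = 0 := by
  have generators (i : Fin 6) : ⟪cliff i.castSucc φ, cliff 6 φ⟫ = 0 :=
    isCliffordFamily_cliff.inner_apply_apply_eq_zero i.castSucc_ne_last φ
  simp only [cm6, jmap_eq_neg_cliff, LinearMap.neg_apply, inner_neg_right, sum_inner,
    real_inner_smul_left, generators, mul_zero, Finset.sum_const_zero, neg_zero]

/-- Pointwise engine of the formula relating ∇ω to the intrinsic endomorphism:
⟨y·(v·φ), z·(j(φ))⟩ - ⟨y·φ, z·(v·(j(φ)))⟩ = -2 ψ_φ⁻(v,y,z). -/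
theorem nabla_omega_engine (φ : Δ) (hφ : ⟪φ, φ⟫ = 1) :
    ∀ v y z : EuclideanSpace ℝ (Fin 6),
      ⟪cm6 y (cm6 v φ), cm6 z (jmap φ)⟫ - ⟪cm6 y φ, cm6 z (cm6 v (jmap φ))⟫ =
        -2 * psiM φ v y z := by
  intro v y z
  simp only [psiM, cm6_eq_cliffordMul]
  rw [nabla_omega_engine_general (isCliffordFamily_cliff.comp_injective
    (Fin.castSucc_injective 6)) fun x ↦ cm6_eq_cliffordMul x φ ▸ inner_cm6_jmap_eq_zero x φ]
  ring

end
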